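/- Assume the ground truth reward r_G satisfies the reward structure assumption, the feature vectors satisfy the positive-inner-product feature assumption, and ‖φ(y_med)‖² < s < ‖φ(y_⋆)‖². Suppose θ_t evolves by gradient flow maximizing V_G. Then for all t ≥ 0, d/dt π_{θ_t}(Y_bad) ≤ 0 and d/dt π_{θ_t}(y_⋆) ≥ 0; that is, the total probability of the bad outputs is non-increasing and the probability of the optimal output y_⋆ is non-decreasing along the gradient flow. -/

import Mathlib

open scoped BigOperators RealInnerProductSpace

noncomputable def policy {Y : Type*} [Fintype Y] {D : ℕ}
    (φ : Y → EuclideanSpace ℝ (Fin D)) (θ : EuclideanSpace ℝ (Fin D)) (y : Y) : ℝ :=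
  Real.exp ⟪φ y, θ⟫ / ∑ z, Real.exp ⟪φ z, θ⟫

noncomputable def expReward {Y : Type*} [Fintype Y] {D : ℕ}
    (φ : Y → EuclideanSpace ℝ (Fin D)) (r : Y → ℝ) (θ : EuclideanSpace ℝ (Fin D)) : ℝ :=
  ∑ y, policy φ θ y * r y

theorem policy_hasFDerivAt {Y : Type*} [Fintype Y] {D : ℕ} [Nonempty Y]
    (φ : Y → EuclideanSpace ℝ (Fin D)) (θ : EuclideanSpace ℝ (Fin D)) (y : Y) :
    HasFDerivAt (fun θ => policy φ θ y)
      (policy φ θ y • (innerSL ℝ (φ y) - ∑ z, policy φ θ z • innerSL ℝ (φ z))) θ := by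
  have he : ∀ z, HasFDerivAt (fun θ : EuclideanSpace ℝ (Fin D) => Real.exp ⟪φ z, θ⟫)
      (Real.exp ⟪φ z, θ⟫ • innerSL ℝ (φ z)) θ := fun z =>
    (innerSL ℝ (φ z)).hasFDerivAt.exp
  have hZ : HasFDerivAt (fun θ : EuclideanSpace ℝ (Fin D) => ∑ z, Real.exp ⟪φ z, θ⟫)
      (∑ z, Real.exp ⟪φ z, θ⟫ • innerSL ℝ (φ z)) θ := HasFDerivAt.fun_sum fun z _ => he z
  have hpos : 0 < ∑ z, Real.exp ⟪φ z, θ⟫ :=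
    Finset.sum_pos (fun z _ => Real.exp_pos _) Finset.univ_nonempty
  have h := (he y).mul ((hasDerivAt_inv hpos.ne').comp_hasFDerivAt θ hZ)
  refine HasFDerivAt.congr_fderiv (f := fun θ => policy φ θ y) h ?_
  ext v
  simp only [policy, Function.comp_apply, add_apply, smul_apply, sub_apply,
    sum_apply, innerSL_apply_apply, smul_eq_mul]
  have : ∑ z, Real.exp ⟪φ z, θ⟫ / (∑ z, Real.exp ⟪φ z, θ⟫) * ⟪φ z, v⟫
      = (∑ z, Real.exp ⟪φ z, θ⟫ * ⟪φ z, v⟫) / (∑ z, Real.exp ⟪φ z, θ⟫) := by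
    rw [Finset.sum_div]
    exact Finset.sum_congr rfl fun z _ => by ring
  rw [this]
  field_simp
  ring

theorem policy_sum {Y : Type*} [Fintype Y] {D : ℕ} [Nonempty Y]
    (φ : Y → EuclideanSpace ℝ (Fin D)) (θ : EuclideanSpace ℝ (Fin D)) :
    ∑ y, policy φ θ y = 1 := by
  have hpos : 0 < ∑ z, Real.exp ⟪φ z, θ⟫ :=
    Finset.sum_pos (fun z _ => Real.exp_pos _) Finset.univ_nonempty
  simp only [policy]
  rw [← Finset.sum_div, div_self hpos.ne']

theorem policy_nonneg {Y : Type*} [Fintype Y] {D : ℕ}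
    (φ : Y → EuclideanSpace ℝ (Fin D)) (θ : EuclideanSpace ℝ (Fin D)) (y : Y) :
    0 ≤ policy φ θ y :=
  div_nonneg (Real.exp_pos _).le (Finset.sum_nonneg fun z _ => (Real.exp_pos _).le)

theorem inner_grad {Y : Type*} [Fintype Y] {D : ℕ} [Nonempty Y]
    (φ : Y → EuclideanSpace ℝ (Fin D)) (r : Y → ℝ) (θ v : EuclideanSpace ℝ (Fin D)) :
    ⟪v, gradient (expReward φ r) θ⟫
      = ∑ y, policy φ θ y * (r y - expReward φ r θ) * ⟪φ y, v⟫ := by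
  have h : HasFDerivAt (expReward φ r) (∑ y, r y • (policy φ θ y •
      (innerSL ℝ (φ y) - ∑ z, policy φ θ z • innerSL ℝ (φ z)))) θ :=
    HasFDerivAt.fun_sum fun y _ => (policy_hasFDerivAt φ θ y).mul_const (r y)
  rw [real_inner_comm, gradient, InnerProductSpace.toDual_symm_apply, h.fderiv]
  simp only [add_apply, smul_apply, sub_apply,
    sum_apply, innerSL_apply_apply, smul_eq_mul]
  have e1 : ∀ y, r y * (policy φ θ y * (⟪φ y, v⟫ - ∑ z, policy φ θ z * ⟪φ z, v⟫))
    = policy φ θ y * r y * ⟪φ y, v⟫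
      - policy φ θ y * r y * ∑ z, policy φ θ z * ⟪φ z, v⟫ := fun y => by ring
  have e2 : ∀ y, policy φ θ y * (r y - expReward φ r θ) * ⟪φ y, v⟫
    = policy φ θ y * r y * ⟪φ y, v⟫
      - expReward φ r θ * (policy φ θ y * ⟪φ y, v⟫) := fun y => by ring
  simp only [e1, e2, Finset.sum_sub_distrib]
  rw [← Finset.sum_mul, ← Finset.mul_sum]
  rfl

theorem pos_inner_monotone {Y : Type*} [Fintype Y] {D : ℕ}
    (φ : Y → EuclideanSpace ℝ (Fin D)) (hφ : ∀ y, φ y ≠ 0)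
    (rG : Y → ℝ) (hrG : ∀ y, rG y ∈ Set.Icc (-1 : ℝ) 1)
    (ystar ymed ybad : Y) (Ybad : Finset Y) (hybad : ybad ∈ Ybad)
    (hsm : ystar ≠ ymed) (hsb : ystar ∉ Ybad) (hmb : ymed ∉ Ybad)
    (hcover : ∀ y : Y, y = ystar ∨ y = ymed ∨ y ∈ Ybad)
    (hr1 : rG ymed < rG ystar) (hr2 : 0 < rG ymed)
    (hr3 : ∀ y ∈ Ybad, rG y ≤ 0)
    (hr4 : ∀ y ∈ Ybad, rG y = rG ybad)
    (Δ1 Δ2 : ℝ) (hΔ1 : Δ1 = rG ystar - rG ymed) (hΔ2 : Δ2 = rG ymed - rG ybad)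
    (s : ℝ) (hs : s = ⟪φ ystar, φ ymed⟫) (hspos : 0 < s)
    (horthbad : ∀ yb ∈ Ybad, ∀ y : Y, y ≠ yb → ⟪φ yb, φ y⟫ = 0)
    (θt : ℝ → EuclideanSpace ℝ (Fin D))
    (hflow : ∀ t : ℝ, 0 ≤ t → HasDerivAt θt (gradient (expReward φ rG) (θt t)) t)
    (hchain1 : ‖φ ymed‖ ^ 2 < s) (hchain2 : s < ‖φ ystar‖ ^ 2) :
    (∀ t : ℝ, 0 ≤ t →
        (∃ d : ℝ, HasDerivAt (fun τ : ℝ => ∑ y ∈ Ybad, policy φ (θt τ) y) d t ∧ d ≤ 0)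
        ∧ ∃ d : ℝ, HasDerivAt (fun τ : ℝ => policy φ (θt τ) ystar) d t ∧ 0 ≤ d)
    ∧ AntitoneOn (fun t : ℝ => ∑ y ∈ Ybad, policy φ (θt t) y) (Set.Ici 0)
    ∧ MonotoneOn (fun t : ℝ => policy φ (θt t) ystar) (Set.Ici 0) := by
  classical
  have : Nonempty Y := ⟨ystar⟩
  have hsum : ∀ F : Y → ℝ, ∑ y, F y = F ystar + F ymed + ∑ y ∈ Ybad, F y := by
    intro F
    have hu : (Finset.univ : Finset Y) = insert ystar (insert ymed Ybad) := by
      ext y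
      simpa using hcover y
    rw [hu, Finset.sum_insert (by simp [hsm, hsb]), Finset.sum_insert hmb]
    ring
  have hd : ∀ t : ℝ, 0 ≤ t → ∀ y, HasDerivAt (fun τ : ℝ => policy φ (θt τ) y)
      (policy φ (θt t) y * (⟪φ y, gradient (expReward φ rG) (θt t)⟫
        - ∑ z, policy φ (θt t) z * ⟪φ z, gradient (expReward φ rG) (θt t)⟫)) t := by
    intro t ht y
    have h := (policy_hasFDerivAt φ (θt t) y).comp_hasDerivAt t (hflow t ht)
    refine HasDerivAt.congr_deriv (f := fun τ : ℝ => policy φ (θt τ) y) h ?_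
    simp only [smul_apply, sub_apply, sum_apply, innerSL_apply_apply, smul_eq_mul]
  have key : ∀ t : ℝ, 0 ≤ t →
        (∃ d : ℝ, HasDerivAt (fun τ : ℝ => ∑ y ∈ Ybad, policy φ (θt τ) y) d t ∧ d ≤ 0)
        ∧ ∃ d : ℝ, HasDerivAt (fun τ : ℝ => policy φ (θt τ) ystar) d t ∧ 0 ≤ d := by
    intro t ht
    have hg := inner_grad φ rG (θt t)
    have hp1 := policy_sum φ (θt t)
    have hp0 := policy_nonneg φ (θt t)
    have hV : expReward φ rG (θt t) = ∑ y, policy φ (θt t) y * rG y := rfl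
    have hdt := hd t ht
    generalize gradient (expReward φ rG) (θt t) = g at *
    generalize expReward φ rG (θt t) = V at *
    have hdB := HasDerivAt.fun_sum (u := Ybad) fun y _ => hdt y
    generalize hp : policy φ (θt t) = p at *
    rw [hsum] at hp1 hV
    have hBr : ∑ y ∈ Ybad, p y * rG y = (∑ y ∈ Ybad, p y) * rG ybad := by
      rw [Finset.sum_mul]
      exact Finset.sum_congr rfl fun y hy => by rw [hr4 y hy]
    rw [hBr] at hV
    have hB0 : 0 ≤ ∑ y ∈ Ybad, p y := Finset.sum_nonneg fun y _ => hp0 y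
    have ha := hp0 ystar
    have hm := hp0 ymed
    have hrb := hr3 ybad hybad
    have hbad : ∀ y ∈ Ybad, ⟪φ y, g⟫ = p y * (rG ybad - V) * ‖φ y‖ ^ 2 := by
      intro y hy
      rw [hg, Finset.sum_eq_single y, hr4 y hy, real_inner_self_eq_norm_sq]
      · intro z _ hz
        rw [real_inner_comm, horthbad y hy z hz, mul_zero]
      · simp
    have hnb : ∀ w, w ∉ Ybad →
        ⟪φ w, g⟫ = p ystar * (rG ystar - V) * ⟪φ ystar, φ w⟫
          + p ymed * (rG ymed - V) * ⟪φ ymed, φ w⟫ := by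
      intro w hw
      rw [hg, hsum, Finset.sum_eq_zero (s := Ybad), add_zero]
      intro y hy
      rw [horthbad y hy w (fun h => hw (h ▸ hy)), mul_zero]
    have hst := hnb ystar hsb
    have hme := hnb ymed hmb
    rw [real_inner_self_eq_norm_sq, real_inner_comm (φ ystar) (φ ymed), ← hs] at hst
    rw [real_inner_self_eq_norm_sq, ← hs] at hme
    have hAM : 0 ≤ ‖φ ystar‖ ^ 2 - 2 * s + ‖φ ymed‖ ^ 2 := by
      rw [hs, ← norm_sub_sq_real]
      positivity
    have hM0 : 0 ≤ ‖φ ymed‖ ^ 2 := by positivity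
    have hcb : rG ybad - V ≤ 0 := by
      have : V - rG ybad = p ystar * (rG ystar - rG ybad) + p ymed * (rG ymed - rG ybad) := by
        rw [hV]; linear_combination rG ybad * hp1
      have h1 := mul_nonneg ha (show 0 ≤ rG ystar - rG ybad by linarith)
      have h2 := mul_nonneg hm (show 0 ≤ rG ymed - rG ybad by linarith)
      linarith
    have hcs : 0 ≤ rG ystar - V := by
      have : rG ystar - V = p ymed * (rG ystar - rG ymed)
          + (∑ y ∈ Ybad, p y) * (rG ystar - rG ybad) := by
        rw [hV]; linear_combination (- rG ystar) * hp1
      have h1 := mul_nonneg hm (show 0 ≤ rG ystar - rG ymed by linarith)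
      have h2 := mul_nonneg hB0 (show 0 ≤ rG ystar - rG ybad by linarith)
      linarith
    have hmed : p ymed * (rG ymed - V) = - (p ystar * (rG ystar - V))
        + (∑ y ∈ Ybad, p y) * (V - rG ybad) := by
      linear_combination (- V) * hp1 - hV
    have hS : ∑ y ∈ Ybad, p y * ⟪φ y, g⟫ ≤ 0 := by
      refine Finset.sum_nonpos fun y hy => ?_
      rw [hbad y hy]
      refine mul_nonpos_of_nonneg_of_nonpos (hp0 y) ?_
      exact mul_nonpos_of_nonpos_of_nonneg
        (mul_nonpos_of_nonneg_of_nonpos (hp0 y) hcb) (by positivity)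
    rw [hmed] at hst hme
    have hX : 0 ≤ p ystar * (rG ystar - V) := mul_nonneg ha hcs
    have hW : 0 ≤ (∑ y ∈ Ybad, p y) * (V - rG ybad) := mul_nonneg hB0 (by linarith)
    rw [hsum] at hdB
    have hdS := hdt ystar
    rw [hsum] at hdS
    generalize (∑ y ∈ Ybad, p y) * (V - rG ybad) = W at *
    generalize p ystar * (rG ystar - V) = X at *
    have h1 : 0 ≤ ⟪φ ymed, g⟫ := by
      have e1 := mul_nonneg hX (show 0 ≤ s - ‖φ ymed‖ ^ 2 by linarith)
      have e2 := mul_nonneg hW hM0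
      rw [hme]; linarith
    have h2 : ⟪φ ymed, g⟫ ≤ ⟪φ ystar, g⟫ := by
      have e1 := mul_nonneg hX hAM
      have e2 := mul_nonneg hW (show 0 ≤ s - ‖φ ymed‖ ^ 2 by linarith)
      rw [hme, hst]; linarith
    have h3 := h1.trans h2
    refine ⟨⟨_, hdB, ?_⟩, ⟨_, hdS, mul_nonneg ha ?_⟩⟩
    · simp only [mul_sub, Finset.sum_sub_distrib, ← Finset.sum_mul]
      have e1 := mul_nonneg hB0 (add_nonneg (mul_nonneg ha h3) (mul_nonneg hm h1))
      have e2 := mul_nonpos_of_nonneg_of_nonpos (add_nonneg ha hm) hS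
      have e3 : p ystar + p ymed = 1 - ∑ y ∈ Ybad, p y := by linarith
      rw [e3] at e2
      linarith
    · have e1 := mul_nonneg hB0 h3
      have e2 := mul_nonneg hm (sub_nonneg.2 h2)
      have e3 : ∑ y ∈ Ybad, p y = 1 - p ystar - p ymed := by linarith
      rw [e3] at e1
      linarith
  refine ⟨key, ?_, ?_⟩
  · apply antitoneOn_of_deriv_nonpos (convex_Ici 0)
    · intro t ht
      obtain ⟨⟨d, h, _⟩, _⟩ := key t ht
      exact h.continuousAt.continuousWithinAt
    · intro t ht
      obtain ⟨⟨d, h, _⟩, _⟩ := key t (interior_subset ht)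
      exact h.differentiableAt.differentiableWithinAt
    · intro t ht
      obtain ⟨⟨d, h, h'⟩, _⟩ := key t (interior_subset ht)
      rw [h.deriv]
      exact h'
  · apply monotoneOn_of_deriv_nonneg (convex_Ici 0)
    · intro t ht
      obtain ⟨_, ⟨d, h, _⟩⟩ := key t ht
      exact h.continuousAt.continuousWithinAt
    · intro t ht
      obtain ⟨_, ⟨d, h, _⟩⟩ := key t (interior_subset ht)
      exact h.differentiableAt.differentiableWithinAt
    · intro t ht
      obtain ⟨_, ⟨d, h, h'⟩⟩ := key t (interior_subset ht)
      rw [h.deriv]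
      exact h'
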